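/- arXiv:2208.13500 — 2 statements merged into one kernel-verified Lean document; each statement's English description precedes it below -/
import Mathlib

section
/- Let (H, x, Y) be an sl2-triple in a finite-dimensional Lie algebra g over a field k of characteristic zero. Let 𝔲 be the supremum of the subspaces g_i over all integers i ≥ 1, and let 𝔳' be the supremum of the subspaces g_i over all integers i ≥ 3. Then 𝔳' is contained in the image of 𝔲 under ad(x): every v ∈ 𝔳' can be written as v = ⁅x, u⁆ for some u ∈ 𝔲. -/
/-- The `i`-eigenspace of `ad H` on a Lie algebra `g`:
`g_i = {z ∈ g | ⁅H, z⁆ = (i : k) • z}`. -/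
def gwt (k : Type*) [Field k] {g : Type*} [LieRing g] [LieAlgebra k g]
    (H : g) (i : ℤ) : Submodule k g where
  carrier := {z | ⁅H, z⁆ = (i : k) • z}
  add_mem' := by
    intro a b ha hb
    simp only [Set.mem_setOf_eq] at *
    rw [lie_add, ha, hb, smul_add]
  zero_mem' := by simp
  smul_mem' := by
    intro c a ha
    simp only [Set.mem_setOf_eq] at *
    rw [lie_smul, ha]
    exact smul_comm c ((i : k)) a

/-- The sum `⨆ {i ≥ n} g_i` of the eigenspaces of `ad H` with eigenvalue at least `n`. -/
def vsp (k : Type*) [Field k] {g : Type*} [LieRing g] [LieAlgebra k g]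
    (H : g) (n : ℤ) : Submodule k g :=
  ⨆ i : ℤ, ⨆ _ : n ≤ i, gwt k H i

/-!
Let `(h, e, f)` act on `M` and let `v` have weight `μ`. Then
`e ^ (n + 1) f v = f e ^ (n + 1) v + (n + 1) (μ + n) e ^ n v`, so if `e ^ (n + 1)` kills `v`, then
`e ^ n` kills `e f v - (n + 1) (μ + n) v`, which again has weight `μ`. If no `μ + n` vanishes,
induction on `n` writes this difference as `e u` with `u` of weight `μ - 2`, and solving for `v`
exhibits it as the image under `e` of a vector of weight `μ - 2`. In finite dimension some power
of `e` kills `v`, because the vectors `e ^ n v` have pairwise distinct weights `μ + 2 n`.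
-/

open LieModule Module.End

section EigenspaceShift

variable {R L M : Type*} [CommRing R] [LieRing L] [LieAlgebra R L]
  [AddCommGroup M] [Module R M] [LieRingModule L M] [LieModule R L M]
  {h x : L} {a μ : R} {m : M}

theorem lie_mem_eigenspace_toEnd_add (hx : ⁅h, x⁆ = a • x)
    (hm : m ∈ (toEnd R L M h).eigenspace μ) :
    ⁅x, m⁆ ∈ (toEnd R L M h).eigenspace (μ + a) := by
  rw [mem_eigenspace_iff, toEnd_apply_apply] at hm ⊢
  rw [leibniz_lie, hx, hm, smul_lie, lie_smul, ← add_smul, add_comm]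

theorem toEnd_pow_mem_eigenspace_toEnd (hx : ⁅h, x⁆ = a • x)
    (hm : m ∈ (toEnd R L M h).eigenspace μ) (n : ℕ) :
    (toEnd R L M x ^ n) m ∈ (toEnd R L M h).eigenspace (μ + n * a) := by
  induction n with
  | zero => simpa using hm
  | succ n ih =>
    have hshift : μ + (n + 1 : ℕ) * a = μ + n * a + a := by push_cast; ring
    rw [pow_succ', Module.End.mul_apply, hshift]
    exact lie_mem_eigenspace_toEnd_add hx ih

theorem exists_toEnd_pow_apply_eq_zero [IsDomain R] [CharZero R] [Module.IsTorsionFree R M]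
    [Module.Finite R M] (ha : a ≠ 0) (hx : ⁅h, x⁆ = a • x)
    (hm : m ∈ (toEnd R L M h).eigenspace μ) :
    ∃ n : ℕ, (toEnd R L M x ^ n) m = 0 := by
  by_contra! hne
  have hinj : Function.Injective fun n : ℕ ↦ μ + n * a := fun p q hpq ↦ by
    simpa [ha] using hpq
  have hli : LinearIndependent R fun n : ℕ ↦ (toEnd R L M x ^ n) m :=
    eigenvectors_linearIndependent' _ _ hinj _
      fun n ↦ ⟨toEnd_pow_mem_eigenspace_toEnd hx hm n, hne n⟩
  have := hli.finite
  exact not_finite ℕ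

theorem toEnd_pow_succ_lie_of_mem_eigenspace {e f : L} (hhe : ⁅h, e⁆ = (2 : R) • e)
    (hef : ⁅e, f⁆ = h) (hm : m ∈ (toEnd R L M h).eigenspace μ) (n : ℕ) :
    (toEnd R L M e ^ (n + 1)) ⁅f, m⁆ =
      ⁅f, (toEnd R L M e ^ (n + 1)) m⁆ + ((n + 1) * (μ + n)) • (toEnd R L M e ^ n) m := by
  have hweight (j : ℕ) :
      ⁅h, (toEnd R L M e ^ j) m⁆ = (μ + j * 2) • (toEnd R L M e ^ j) m :=
    mem_eigenspace_iff.mp (toEnd_pow_mem_eigenspace_toEnd hhe hm j)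
  have hsucc (j : ℕ) (w : M) : (toEnd R L M e ^ (j + 1)) w = ⁅e, (toEnd R L M e ^ j) w⁆ := by
    rw [pow_succ', Module.End.mul_apply, toEnd_apply_apply]
  induction n with
  | zero =>
    have hm' : ⁅h, m⁆ = μ • m := mem_eigenspace_iff.mp hm
    simp [leibniz_lie e, hef, hm', add_comm]
  | succ n ih =>
    calc (toEnd R L M e ^ (n + 1 + 1)) ⁅f, m⁆
        = ⁅e, ⁅f, (toEnd R L M e ^ (n + 1)) m⁆⁆
            + ((n + 1) * (μ + n)) • (toEnd R L M e ^ (n + 1)) m := by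
          rw [hsucc, ih, lie_add, lie_smul, ← hsucc]
      _ = ⁅f, (toEnd R L M e ^ (n + 1 + 1)) m⁆
            + (μ + (n + 1 : ℕ) * 2) • (toEnd R L M e ^ (n + 1)) m
            + ((n + 1) * (μ + n)) • (toEnd R L M e ^ (n + 1)) m := by
          rw [leibniz_lie e, hef, hweight, ← hsucc, add_comm (_ • _) ⁅f, _⁆]
      _ = _ := by push_cast; module

end EigenspaceShift

section Field

variable {k L M : Type*} [Field k] [CharZero k] [LieRing L] [LieAlgebra k L]
  [AddCommGroup M] [Module k M] [LieRingModule L M] [LieModule k L M] {h e f : L}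

theorem exists_lie_eq_of_toEnd_pow_apply_eq_zero (hhe : ⁅h, e⁆ = (2 : k) • e)
    (hhf : ⁅h, f⁆ = (-2 : k) • f) (hef : ⁅e, f⁆ = h) {μ : k} (hμ : ∀ j : ℕ, μ + j ≠ 0)
    {n : ℕ} {v : M} (hv : v ∈ (toEnd k L M h).eigenspace μ) (hn : (toEnd k L M e ^ n) v = 0) :
    ∃ u ∈ (toEnd k L M h).eigenspace (μ - 2), ⁅e, u⁆ = v := by
  induction n generalizing v with
  | zero => exact ⟨0, zero_mem _, by simpa using hn.symm⟩
  | succ n ih =>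
    set c : k := (n + 1) * (μ + n)
    have hc_ne : c ≠ 0 := mul_ne_zero n.cast_add_one_ne_zero (hμ n)
    have hfv : ⁅f, v⁆ ∈ (toEnd k L M h).eigenspace (μ - 2) := by
      simpa only [sub_eq_add_neg] using lie_mem_eigenspace_toEnd_add hhf hv
    have hefv : ⁅e, ⁅f, v⁆⁆ ∈ (toEnd k L M h).eigenspace μ := by
      simpa only [sub_add_cancel] using lie_mem_eigenspace_toEnd_add hhe hfv
    have hkill : (toEnd k L M e ^ n) (⁅e, ⁅f, v⁆⁆ - c • v) = 0 := by
      have hcomm := toEnd_pow_succ_lie_of_mem_eigenspace hhe hef hv n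
      rw [hn, lie_zero, zero_add, pow_succ, Module.End.mul_apply, toEnd_apply_apply] at hcomm
      rw [map_sub, map_smul, hcomm, sub_self]
    obtain ⟨u, hu, heu⟩ := ih (sub_mem hefv (Submodule.smul_mem _ c hv)) hkill
    refine ⟨c⁻¹ • (⁅f, v⁆ - u), Submodule.smul_mem _ _ (sub_mem hfv hu), ?_⟩
    rw [lie_smul, lie_sub, heu, sub_sub_cancel, inv_smul_smul₀ hc_ne]

theorem stmt5_general (hhe : ⁅h, e⁆ = (2 : k) • e) (hhf : ⁅h, f⁆ = (-2 : k) • f)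
    (hef : ⁅e, f⁆ = h) {n : ℤ} (hn : -1 ≤ n)
    (hnil : ∀ i : ℤ, n + 2 ≤ i → ∀ v ∈ (toEnd k L M h).eigenspace (i : k),
      ∃ j : ℕ, (toEnd k L M e ^ j) v = 0) :
    ⨆ (i : ℤ) (_ : n + 2 ≤ i), (toEnd k L M h).eigenspace (i : k) ≤
      (⨆ (i : ℤ) (_ : n ≤ i), (toEnd k L M h).eigenspace (i : k)).map (toEnd k L M e) := by
  refine iSup₂_le fun i hi v hv ↦ ?_
  have hi_ne (j : ℕ) : (i : k) + j ≠ 0 := by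
    have : i + j ≠ 0 := by omega
    exact_mod_cast this
  obtain ⟨j, hj⟩ := hnil i hi v hv
  obtain ⟨u, hu, rfl⟩ := exists_lie_eq_of_toEnd_pow_apply_eq_zero hhe hhf hef hi_ne hv hj
  have hu' : u ∈ (toEnd k L M h).eigenspace ((i - 2 : ℤ) : k) := by exact_mod_cast hu
  exact Submodule.mem_map_of_mem
    (Submodule.mem_iSup_of_mem (i - 2) (Submodule.mem_iSup_of_mem (by omega) hu'))

end Field

section AdjointRepresentation

variable {k g : Type*} [Field k] [LieRing g] [LieAlgebra k g]

theorem gwt_eq_eigenspace (H : g) (i : ℤ) : gwt k H i = (toEnd k g g H).eigenspace (i : k) := by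
  ext z
  rw [mem_eigenspace_iff]
  rfl

theorem vsp_eq_iSup_eigenspace (H : g) (n : ℤ) :
    vsp k H n = ⨆ (i : ℤ) (_ : n ≤ i), (toEnd k g g H).eigenspace (i : k) := by
  simp only [vsp, gwt_eq_eigenspace]

end AdjointRepresentation

/-- With `𝔲 = ⨆ {i ≥ 1} g_i` and `𝔳' = ⨆ {i ≥ 3} g_i`, one has `𝔳' ⊆ ⁅x, 𝔲⁆`. -/
theorem stmt5 {k : Type*} [Field k] [CharZero k]
    {g : Type*} [LieRing g] [LieAlgebra k g] [FiniteDimensional k g]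
    (H x Y : g) (hHx : ⁅H, x⁆ = (2 : k) • x) (hHY : ⁅H, Y⁆ = (-2 : k) • Y)
    (hxY : ⁅x, Y⁆ = H) :
    ∀ v ∈ vsp k H 3, ∃ u ∈ vsp k H 1, ⁅x, u⁆ = v := by
  simp only [vsp_eq_iSup_eigenspace]
  exact stmt5_general (n := 1) hHx hHY hxY (by norm_num) fun _ _ _ hv ↦
    exists_toEnd_pow_apply_eq_zero two_ne_zero hHx hv
end

section
/- Let (H, x, Y) be an sl2-triple in a finite-dimensional Lie algebra g over a field k of characteristic zero. Then for every integer i, the eigenspaces g_i and g_{-i} of ad(H) have the same dimension. -/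
/-!
In a finite-dimensional representation, the nonzero powers of `x` are eigenvectors of `ad H` for
distinct eigenvalues, so only finitely many exist: `x` acts nilpotently, and likewise `Y`. Hence
`θ = exp x * exp (-Y) * exp x` makes sense as an invertible operator. Since `exp a` conjugates `b`
to `exp (ad a) b`, successive conjugation by the three factors takes `H` to `H - 2 • x`, then to
`-H - 2 • x`, then to `-H`. So `θ` anticommutes with `H` and carries the `μ`-eigenspace of `H`
onto its `-μ`-eigenspace.
-/

open LieAlgebra Module

section CommutatorBracket

attribute [local instance] LieRing.ofAssociativeRing

section Nilpotent

variable {R A : Type*} [CommRing R] [Ring A] [Algebra R A] {h e : A} {c : R}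

theorem lie_pow_of_lie_eq_smul (he : ⁅h, e⁆ = c • e) (n : ℕ) :
    ⁅h, e ^ n⁆ = (n * c) • e ^ n := by
  induction n with
  | zero => simp [Ring.lie_def]
  | succ n ih =>
    calc ⁅h, e ^ (n + 1)⁆ = ⁅h, e ^ n⁆ * e + e ^ n * ⁅h, e⁆ := by
          simp only [Ring.lie_def, pow_succ]; noncomm_ring
      _ = ((n + 1 : ℕ) * c) • e ^ (n + 1) := by
          rw [ih, he, smul_mul_assoc, mul_smul_comm, ← pow_succ, ← add_smul]
          congr 1
          push_cast
          ring

theorem isNilpotent_of_lie_eq_smul [IsDomain R] [CharZero R] [IsTorsionFree R A]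
    [IsNoetherian R A] (hc : c ≠ 0) (he : ⁅h, e⁆ = c • e) : IsNilpotent e := by
  by_contra hn
  have hinj : Function.Injective fun n : ℕ ↦ (n : R) * c := fun a b hab ↦ by
    simpa [hc] using hab
  have hli : LinearIndependent R fun n : ℕ ↦ e ^ n :=
    (ad R A h).eigenvectors_linearIndependent' _ hinj _ fun n ↦
      ⟨End.mem_eigenspace_iff.2 (lie_pow_of_lie_eq_smul he n), fun h0 ↦ hn ⟨n, h0⟩⟩
  have : Finite ℕ := hli.finite_of_isNoetherian
  exact not_finite ℕ

end Nilpotent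

section Exp

variable {A : Type*} [Ring A] [Algebra ℚ A]

theorem exp_mulRight {a : A} (ha : IsNilpotent a) :
    IsNilpotent.exp (LinearMap.mulRight ℚ a) = LinearMap.mulRight ℚ (IsNilpotent.exp a) := by
  obtain ⟨n, hn⟩ := ha
  rw [IsNilpotent.exp_eq_sum hn, IsNilpotent.exp_eq_sum (k := n) (by simp [hn])]
  ext b
  simp [Finset.mul_sum]

theorem semiconjBy_exp {a : A} (ha : IsNilpotent a) (b : A) :
    SemiconjBy (IsNilpotent.exp a) b (IsNilpotent.exp (ad ℚ A a) b) := by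
  have hadd : LinearMap.mulLeft ℚ a = LinearMap.mulRight ℚ a + ad ℚ A a := by
    ext x
    simp [Ring.lie_def]
  have hcomm : Commute (LinearMap.mulRight ℚ a) (ad ℚ A a) := by
    ext x
    simp [Ring.lie_def, sub_mul, mul_assoc]
  have hexp : LinearMap.mulLeft ℚ (IsNilpotent.exp a) =
      LinearMap.mulRight ℚ (IsNilpotent.exp a) * IsNilpotent.exp (ad ℚ A a) :=
    calc LinearMap.mulLeft ℚ (IsNilpotent.exp a)
        = IsNilpotent.exp (LinearMap.mulLeft ℚ a) := IsNilpotent.map_exp ha (Algebra.lmul ℚ A)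
      _ = LinearMap.mulRight ℚ (IsNilpotent.exp a) * IsNilpotent.exp (ad ℚ A a) := by
          rw [hadd, IsNilpotent.exp_add_of_commute hcomm
            ((LinearMap.isNilpotent_mulRight_iff ℚ a).2 ha) (ad_nilpotent_of_nilpotent ha),
            exp_mulRight ha]
  exact LinearMap.congr_fun hexp b

theorem exp_smul_eq_of_pow_three_smul_eq_zero {M : Type*} [AddCommGroup M] [Module A M]
    [Module ℚ M] {a : A} {m : M} (ha : IsNilpotent a) (h : a ^ 3 • m = 0) :
    IsNilpotent.exp a • m = m + a • m + (2 : ℚ)⁻¹ • a ^ 2 • m := by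
  simp [IsNilpotent.exp_smul_eq_sum h ha, Finset.sum_range_succ]

theorem semiconjBy_exp_of_lie_lie_eq_two_nsmul {a b c d : A} (ha : IsNilpotent a) (hab : ⁅a, b⁆ = c)
    (hac : ⁅a, c⁆ = 2 • d) (had : ⁅a, d⁆ = 0) :
    SemiconjBy (IsNilpotent.exp a) b (b + c + d) := by
  have hsq : (ad ℚ A a ^ 2) b = (2 : ℚ) • d := by
    simp only [pow_two, End.mul_apply, ad_apply, hab, hac, ofNat_smul_eq_nsmul]
  have hcube : (ad ℚ A a ^ 3) b = 0 := by
    rw [pow_succ', End.mul_apply, hsq, map_smul, ad_apply, had, smul_zero]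
  have hexp : IsNilpotent.exp (ad ℚ A a) b = b + c + d := by
    simpa only [End.smul_def, ad_apply, hab, hsq, inv_smul_smul₀ (two_ne_zero' ℚ)] using
      exp_smul_eq_of_pow_three_smul_eq_zero (ad_nilpotent_of_nilpotent ha) hcube
  exact hexp ▸ semiconjBy_exp ha b

/-- The element `exp e * exp (-f) * exp e` attached to nilpotent elements `e`, `f` of an associative
`ℚ`-algebra. When `e`, `f` belong to an `sl₂`-triple, it is the image of a representative in `SL₂`
of the nontrivial element of the Weyl group. As `IsNilpotent.exp` is a finite sum cut off at the
nilpotency class, the definition is meaningful only for nilpotent `e` and `f`. -/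
noncomputable def weylElement (e f : A) : A :=
  IsNilpotent.exp e * IsNilpotent.exp (-f) * IsNilpotent.exp e

variable {h e f : A}

theorem isUnit_weylElement (he : IsNilpotent e) (hf : IsNilpotent f) :
    IsUnit (weylElement e f) :=
  ((IsNilpotent.isUnit_exp he).mul (IsNilpotent.isUnit_exp hf.neg)).mul
    (IsNilpotent.isUnit_exp he)

theorem semiconjBy_weylElement (he : IsNilpotent e) (hf : IsNilpotent f)
    (hhe : ⁅h, e⁆ = 2 • e) (hhf : ⁅h, f⁆ = -(2 • f)) (hef : ⁅e, f⁆ = h) :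
    SemiconjBy (weylElement e f) h (-h) := by
  have heh : ⁅e, h⁆ = -(2 • e) := by rw [← lie_skew, hhe]
  have hfh : ⁅f, h⁆ = 2 • f := by rw [← lie_skew, hhf, neg_neg]
  have hfe : ⁅f, e⁆ = -h := by rw [← lie_skew, hef]
  have h₁ : SemiconjBy (IsNilpotent.exp e) h (h - 2 • e) := by
    convert semiconjBy_exp_of_lie_lie_eq_two_nsmul (d := 0) he heh ?_ (lie_zero e) using 1
    · abel
    · simp only [lie_neg, lie_nsmul, lie_self, smul_zero, neg_zero]
  have h₂ : SemiconjBy (IsNilpotent.exp (-f)) (h - 2 • e) (-h - 2 • e) := by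
    convert semiconjBy_exp_of_lie_lie_eq_two_nsmul (b := h - 2 • e) (c := -(2 • f) - 2 • h)
      (d := 2 • f) hf.neg ?_ ?_ ?_ using 1
    · abel
    · simp only [neg_lie, lie_sub, lie_nsmul, hfh, hfe]; abel
    · simp only [neg_lie, lie_sub, lie_neg, lie_nsmul, lie_self, hfh]; abel
    · simp only [neg_lie, lie_nsmul, lie_self, smul_zero, neg_zero]
  have h₃ : SemiconjBy (IsNilpotent.exp e) (-h - 2 • e) (-h) := by
    convert semiconjBy_exp_of_lie_lie_eq_two_nsmul (b := -h - 2 • e) (c := 2 • e) (d := 0)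
      he ?_ ?_ (lie_zero e) using 1
    · abel
    · simp only [lie_sub, lie_neg, lie_nsmul, lie_self, heh]; abel
    · simp only [lie_nsmul, lie_self, smul_zero]
  exact (h₃.mul_left h₂).mul_left h₁

end Exp

section Eigenspace

variable {R M : Type*} [CommRing R] [AddCommGroup M] [Module R M]

theorem map_eigenspace_of_semiconjBy {u a b : End R M} (hu : IsUnit u) (h : SemiconjBy u a b)
    (μ : R) : (a.eigenspace μ).map u = b.eigenspace μ := by
  have hbij := (End.isUnit_iff u).1 hu
  ext y
  obtain ⟨x, rfl⟩ := hbij.surjective y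
  have hx : b (u x) = u (a x) := (LinearMap.congr_fun h x).symm
  rw [← SetLike.mem_coe, Submodule.map_coe, hbij.injective.mem_set_image,
    SetLike.mem_coe, End.mem_eigenspace_iff, End.mem_eigenspace_iff, hx, ← map_smul,
    hbij.injective.eq_iff]

theorem eigenspace_neg (a : End R M) (μ : R) : (-a).eigenspace μ = a.eigenspace (-μ) := by
  ext x
  simp [neg_eq_iff_eq_neg]

theorem finrank_eigenspace_neg_of_isNilpotent [Algebra ℚ (End R M)] {h e f : End R M}
    (he : IsNilpotent e) (hf : IsNilpotent f) (hhe : ⁅h, e⁆ = 2 • e) (hhf : ⁅h, f⁆ = -(2 • f))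
    (hef : ⁅e, f⁆ = h) (μ : R) :
    finrank R (h.eigenspace (-μ)) = finrank R (h.eigenspace μ) := by
  have hu := isUnit_weylElement he hf
  rw [← eigenspace_neg,
    ← map_eigenspace_of_semiconjBy hu (semiconjBy_weylElement he hf hhe hhf hef)]
  exact (Submodule.equivMapOfInjective _ ((End.isUnit_iff _).1 hu).injective _).finrank_eq.symm

end Eigenspace

theorem stmt15_general {k L M : Type*} [Field k] [CharZero k] [LieRing L] [LieAlgebra k L]
    [AddCommGroup M] [Module k M] [FiniteDimensional k M] [LieRingModule L M] [LieModule k L M]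
    {h e f : L} (hhe : ⁅h, e⁆ = (2 : k) • e) (hhf : ⁅h, f⁆ = (-2 : k) • f) (hef : ⁅e, f⁆ = h)
    (μ : k) :
    finrank k ((LieModule.toEnd k L M h).eigenspace μ) =
      finrank k ((LieModule.toEnd k L M h).eigenspace (-μ)) := by
  let : Algebra ℚ (End k M) := Algebra.compHom _ (algebraMap ℚ k)
  let φ := LieModule.toEnd k L M
  have hφe : ⁅φ h, φ e⁆ = (2 : k) • φ e := by rw [← LieHom.map_lie, hhe, map_smul]
  have hφf : ⁅φ h, φ f⁆ = (-2 : k) • φ f := by rw [← LieHom.map_lie, hhf, map_smul]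
  have hφef : ⁅φ e, φ f⁆ = φ h := by rw [← LieHom.map_lie, hef]
  refine (finrank_eigenspace_neg_of_isNilpotent (isNilpotent_of_lie_eq_smul two_ne_zero hφe)
    (isNilpotent_of_lie_eq_smul (neg_ne_zero.2 two_ne_zero) hφf) ?_ ?_ hφef μ).symm
  · rw [hφe, ofNat_smul_eq_nsmul]
  · rw [hφf, neg_smul, ofNat_smul_eq_nsmul]

end CommutatorBracket

theorem gwt_eq_eigenspace_toEnd {k g : Type*} [Field k] [LieRing g] [LieAlgebra k g] (H : g)
    (i : ℤ) : gwt k H i = (LieModule.toEnd k g g H).eigenspace (i : k) := by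
  ext z
  rw [End.mem_eigenspace_iff]
  rfl

/-- The eigenspaces `g_i` and `g_{-i}` of `ad H` have the same dimension. -/
theorem stmt15 {k : Type*} [Field k] [CharZero k]
    {g : Type*} [LieRing g] [LieAlgebra k g] [FiniteDimensional k g]
    (H x Y : g) (hHx : ⁅H, x⁆ = (2 : k) • x) (hHY : ⁅H, Y⁆ = (-2 : k) • Y)
    (hxY : ⁅x, Y⁆ = H) :
    ∀ i : ℤ, Module.finrank k (gwt k H i) = Module.finrank k (gwt k H (-i)) := by
  intro i
  rw [gwt_eq_eigenspace_toEnd, gwt_eq_eigenspace_toEnd, Int.cast_neg]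
  exact stmt15_general hHx hHY hxY (i : k)
end
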